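/- arXiv:math/0012029 — 2 statements merged into one kernel-verified Lean document; each statement's English description precedes it below -/
import Mathlib

section
/- For every n ≥ 4, the number of permutations of {1,…,n} avoiding 132 and containing 231 exactly once equals the number of permutations of {1,…,n} containing each of 132 and 231 exactly once; that is, s_n(132;231) = s_n(∅;{132,231}) for n ≥ 4 (both equal 2^{n−3}). -/
/-- Number of occurrences of the pattern `α ∈ S_k` in the permutation `π ∈ S_n`:
the number of strictly increasing choices of `k` indices such that the corresponding
subword of `π` is order-isomorphic to `α`. -/
noncomputable def occCount {k n : ℕ} (α : Equiv.Perm (Fin k)) (π : Equiv.Perm (Fin n)) : ℕ :=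
  Nat.card {f : Fin k → Fin n // StrictMono f ∧ ∀ a b : Fin k, α a < α b ↔ π (f a) < π (f b)}

/-- `π` avoids the pattern `α`. -/
def avoids {k n : ℕ} (α : Equiv.Perm (Fin k)) (π : Equiv.Perm (Fin n)) : Prop :=
  occCount α π = 0

/-- `π` contains the pattern `α` exactly once. -/
def containsOnce {k n : ℕ} (α : Equiv.Perm (Fin k)) (π : Equiv.Perm (Fin n)) : Prop :=
  occCount α π = 1

/-- The pattern `123` (as a permutation of `Fin 3`, 0-indexed). -/
def p123 : Equiv.Perm (Fin 3) := ⟨![0,1,2], ![0,1,2], by decide, by decide⟩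
/-- The pattern `132`. -/
def p132 : Equiv.Perm (Fin 3) := ⟨![0,2,1], ![0,2,1], by decide, by decide⟩
/-- The pattern `213`. -/
def p213 : Equiv.Perm (Fin 3) := ⟨![1,0,2], ![1,0,2], by decide, by decide⟩
/-- The pattern `231`. -/
def p231 : Equiv.Perm (Fin 3) := ⟨![1,2,0], ![2,0,1], by decide, by decide⟩
/-- The pattern `312`. -/
def p312 : Equiv.Perm (Fin 3) := ⟨![2,0,1], ![1,2,0], by decide, by decide⟩
/-- The pattern `321`. -/
def p321 : Equiv.Perm (Fin 3) := ⟨![2,1,0], ![2,1,0], by decide, by decide⟩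

/-- `s_n(α;β)`: the number of permutations of `{1,…,n}` that avoid `α` and contain `β`
exactly once. -/
noncomputable def sAvoidContain (α β : Equiv.Perm (Fin 3)) (n : ℕ) : ℕ :=
  Nat.card {π : Equiv.Perm (Fin n) // avoids α π ∧ containsOnce β π}

/-- `s_n(∅;{α,β})`: the number of permutations of `{1,…,n}` that contain each of `α` and `β`
exactly once. -/
noncomputable def sContainBoth (α β : Equiv.Perm (Fin 3)) (n : ℕ) : ℕ :=
  Nat.card {π : Equiv.Perm (Fin n) // containsOnce α π ∧ containsOnce β π}

/-- Insert the maximum value at position `p`. -/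
def insMax {m : ℕ} (p : Fin (m + 1)) (σ : Equiv.Perm (Fin m)) : Equiv.Perm (Fin (m + 1)) :=
  ((finSuccEquiv' p).trans σ.optionCongr).trans (finSuccEquiv' (Fin.last m)).symm

theorem insMax_self {m : ℕ} (p : Fin (m + 1)) (σ : Equiv.Perm (Fin m)) :
    insMax p σ p = Fin.last m := by
  simp [insMax]

theorem insMax_succAbove {m : ℕ} (p : Fin (m + 1)) (σ : Equiv.Perm (Fin m)) (i : Fin m) :
    insMax p σ (p.succAbove i) = (σ i).castSucc := by
  simp [insMax]

theorem insMax_inj {m : ℕ} (p : Fin (m + 1)) {σ τ : Equiv.Perm (Fin m)}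
    (h : insMax p σ = insMax p τ) : σ = τ := by
  ext i
  have := congrArg (fun e => e (p.succAbove i)) h
  simp only [insMax_succAbove] at this
  exact congrArg Fin.val (Fin.castSucc_injective _ this)

theorem exists_insMax {m : ℕ} (p : Fin (m + 1)) (π : Equiv.Perm (Fin (m + 1)))
    (h : π p = Fin.last m) : ∃ σ, insMax p σ = π := by
  have hne : ∀ i, π (p.succAbove i) ≠ Fin.last m := by
    intro i hi
    exact Fin.succAbove_ne p i (π.injective (hi.trans h.symm))
  let g : Fin m → Fin m := fun i => (π (p.succAbove i)).castPred (hne i)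
  have hg : Function.Injective g := by
    intro i j hij
    have := congrArg Fin.castSucc hij
    simp only [g, Fin.castSucc_castPred] at this
    exact Fin.succAbove_right_injective (π.injective this)
  refine ⟨Equiv.ofBijective g (Finite.injective_iff_bijective.mp hg), ?_⟩
  apply Equiv.ext
  intro x
  rcases Fin.eq_self_or_eq_succAbove p x with rfl | ⟨i, rfl⟩
  · rw [insMax_self, h]
  · rw [insMax_succAbove]
    simp [g]

theorem occCount_insMax {m : ℕ} (α : Equiv.Perm (Fin 3)) (h1 : α 0 < α 1) (h2 : α 2 < α 1)
    (p : Fin (m + 1)) (hp : p = 0 ∨ p = Fin.last m) (σ : Equiv.Perm (Fin m)) :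
    occCount α (insMax p σ) = occCount α σ := by
  symm
  unfold occCount
  refine Nat.card_eq_of_bijective (fun f => ⟨fun a => p.succAbove (f.1 a), ?_, ?_⟩) ⟨?_, ?_⟩
  · exact (Fin.strictMono_succAbove p).comp f.2.1
  · intro a b
    rw [insMax_succAbove, insMax_succAbove, Fin.castSucc_lt_castSucc_iff]
    exact f.2.2 a b
  · intro f g hfg
    apply Subtype.ext
    funext a
    have := congrFun (congrArg Subtype.val hfg) a
    exact Fin.succAbove_right_injective this
  · rintro ⟨f, hf, hα⟩
    have hne : ∀ a, f a ≠ p := by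
      intro a ha
      rcases hp with rfl | rfl
      · have h0 : f 0 = 0 := by
          have := hf.monotone (Fin.zero_le a)
          rw [ha] at this
          exact le_antisymm this (Fin.zero_le _)
        have := (hα 0 1).1 h1
        rw [h0, insMax_self] at this
        exact absurd this (not_lt.2 (Fin.le_last _))
      · have h0 : f 2 = Fin.last m := by
          have := hf.monotone (show a ≤ 2 from Fin.le_last a)
          rw [ha] at this
          exact le_antisymm (Fin.le_last _) this
        have := (hα 2 1).1 h2
        rw [h0, insMax_self] at this
        exact absurd this (not_lt.2 (Fin.le_last _))
    choose g hg using fun a => Fin.exists_succAbove_eq (hne a)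
    refine ⟨⟨g, ?_, ?_⟩, ?_⟩
    · intro a b hab
      have := hf hab
      rw [← hg a, ← hg b] at this
      exact (Fin.strictMono_succAbove p).lt_iff_lt.1 this
    · intro a b
      rw [hα a b, ← hg a, ← hg b, insMax_succAbove, insMax_succAbove,
        Fin.castSucc_lt_castSucc_iff]
    · apply Subtype.ext
      funext a
      exact hg a

theorem mul_le_occ {m : ℕ} (π : Equiv.Perm (Fin (m + 1))) (p : Fin (m + 1))
    (h : π p = Fin.last m) :
    (p : ℕ) * (m - p) ≤ occCount p132 π + occCount p231 π := by
  have hlt : ∀ i, i ≠ p → π i < π p := by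
    intro i hi
    rw [h]
    exact lt_of_le_of_ne (Fin.le_last _) (fun e => hi (π.injective (e.trans h.symm)))
  have key : Nat.card (Set.Iio p × Set.Ioi p) = (p : ℕ) * (m - p) := by
    rw [Nat.card_prod, Nat.card_eq_fintype_card, Nat.card_eq_fintype_card]
    simp
  have mono : ∀ i j, i < p → p < j → StrictMono ![i, p, j] := by
    intro i j hi hj a b hab
    have := hi.trans hj
    fin_cases a <;> fin_cases b <;> simp_all
  rw [← key]
  unfold occCount
  rw [← Nat.card_sum]
  refine Nat.card_le_card_of_injective (fun x =>
    if hx : π x.1.1 < π x.2.1 then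
      Sum.inl ⟨![x.1.1, p, x.2.1], mono _ _ x.1.2 x.2.2, ?_⟩
    else Sum.inr ⟨![x.1.1, p, x.2.1], mono _ _ x.1.2 x.2.2, ?_⟩) ?_
  · have a1 := hlt _ (ne_of_lt x.1.2)
    have a2 := hlt _ (ne_of_gt x.2.2)
    intro a b
    fin_cases a <;> fin_cases b <;> simp [p132, hx, a1, a2, hx.le, a1.le, a2.le]
  · have a1 := hlt _ (ne_of_lt x.1.2)
    have a2 := hlt _ (ne_of_gt x.2.2)
    have hx' : π x.2.1 < π x.1.1 := by
      refine lt_of_le_of_ne (not_lt.1 hx) (fun e => ?_)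
      have := π.injective e
      have h3 : x.1.1 < x.2.1 := lt_trans x.1.2 x.2.2
      exact absurd this (ne_of_gt h3)
    intro a b
    fin_cases a <;> fin_cases b <;> simp [p231, hx', a1, a2, hx'.le, a1.le, a2.le]
  · rintro ⟨⟨i, hi⟩, ⟨j, hj⟩⟩ ⟨⟨i', hi'⟩, ⟨j', hj'⟩⟩ hxy
    simp only at hxy
    split_ifs at hxy <;> simp_all

/-- Number of permutations with prescribed numbers of occurrences. -/
noncomputable def cnt (a b n : ℕ) : ℕ :=
  Nat.card {π : Equiv.Perm (Fin n) // occCount p132 π = a ∧ occCount p231 π = b}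

theorem cnt_succ (a b m : ℕ) (hab : a + b + 1 < m) : cnt a b (m + 1) = 2 * cnt a b m := by
  unfold cnt
  have h2 : 2 = Nat.card Bool := by simp
  conv_rhs => rw [h2]
  rw [← Nat.card_prod]
  symm
  have hpos : ∀ c : Bool, (if c then (0 : Fin (m + 1)) else Fin.last m) = 0 ∨
      (if c then (0 : Fin (m + 1)) else Fin.last m) = Fin.last m := by
    intro c; cases c <;> simp
  have e1 := occCount_insMax (m := m) p132 (by decide) (by decide)
  have e2 := occCount_insMax (m := m) p231 (by decide) (by decide)
  refine Nat.card_eq_of_bijective (fun x =>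
    ⟨insMax (if x.1 then 0 else Fin.last m) x.2.1, ?_, ?_⟩) ⟨?_, ?_⟩
  · rw [e1 _ (hpos _)]; exact x.2.2.1
  · rw [e2 _ (hpos _)]; exact x.2.2.2
  · rintro ⟨c, σ, hσ⟩ ⟨d, τ, hτ⟩ h
    have h := congrArg Subtype.val h
    simp only at h
    have hcd : c = d := by
      have h3 := insMax_self (if c then 0 else Fin.last m) σ
      rw [h] at h3
      replace h3 := h3.trans (insMax_self (if d then 0 else Fin.last m) τ).symm
      have h3 := congrArg Fin.val ((insMax _ τ).injective h3)
      cases c <;> cases d <;> simp at h3 ⊢ <;> omega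
    subst hcd
    have := insMax_inj _ h
    subst this
    rfl
  · rintro ⟨π, ha, hb⟩
    obtain ⟨p, hp⟩ := π.surjective (Fin.last m)
    have hle := mul_le_occ π p hp
    rw [ha, hb] at hle
    have hp' : p = 0 ∨ p = Fin.last m := by
      by_contra hcon
      push Not at hcon
      obtain ⟨c1, c2⟩ := hcon
      have c1 : (p : ℕ) ≠ 0 := fun e => c1 (Fin.ext e)
      have c2 : (p : ℕ) ≠ m := fun e => c2 (Fin.ext e)
      have c3 := p.isLt
      obtain ⟨x, hx⟩ : ∃ x, (p : ℕ) = x + 1 := ⟨p - 1, by omega⟩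
      obtain ⟨y, hy⟩ : ∃ y, m - (p : ℕ) = y + 1 := ⟨m - p - 1, by omega⟩
      rw [hy, hx] at hle
      have : m = x + y + 2 := by omega
      nlinarith [Nat.zero_le (x * y)]
    obtain ⟨σ, rfl⟩ := exists_insMax p π hp
    have ha' := (e1 _ hp' σ).symm.trans ha
    have hb' := (e2 _ hp' σ).symm.trans hb
    rcases hp' with rfl | rfl
    · exact ⟨⟨true, σ, ha', hb'⟩, rfl⟩
    · exact ⟨⟨false, σ, ha', hb'⟩, rfl⟩

/-- Computable occurrence count. -/
def occC {n : ℕ} (α : Equiv.Perm (Fin 3)) (π : Equiv.Perm (Fin n)) : ℕ :=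
  Fintype.card {f : Fin 3 → Fin n // (∀ a b, a < b → f a < f b) ∧
    ∀ a b : Fin 3, α a < α b ↔ π (f a) < π (f b)}

theorem occC_eq {n : ℕ} (α : Equiv.Perm (Fin 3)) (π : Equiv.Perm (Fin n)) :
    occCount α π = occC α π := by
  unfold occCount occC
  rw [← Nat.card_eq_fintype_card]
  rfl

theorem cnt_eq (a b n : ℕ) : cnt a b n =
    Fintype.card {π : Equiv.Perm (Fin n) // occC p132 π = a ∧ occC p231 π = b} := by
  unfold cnt
  rw [← Nat.card_eq_fintype_card]
  simp only [occC_eq]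

theorem cnt_three : cnt 0 1 3 = 1 := by
  rw [cnt_eq]
  decide +kernel

theorem cnt_four : cnt 1 1 4 = 2 := by
  rw [cnt_eq]
  decide +kernel

/-- For `n ≥ 4`, `s_n(132;231) = s_n(∅;{132,231})`, both being equal to `2^{n−3}`. -/
theorem sAvoidContain_132_231_eq_sContainBoth :
    ∀ n : ℕ, 4 ≤ n →
      sAvoidContain p132 p231 n = sContainBoth p132 p231 n ∧
        sAvoidContain p132 p231 n = 2 ^ (n - 3) := by
  have hf : ∀ k, cnt 0 1 (k + 3) = 2 ^ k := by
    intro k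
    induction k with
    | zero => exact cnt_three
    | succ k ih =>
      rw [show k + 1 + 3 = (k + 3) + 1 by ring, cnt_succ _ _ _ (by omega), ih]
      ring
  have hg : ∀ k, cnt 1 1 (k + 4) = 2 ^ (k + 1) := by
    intro k
    induction k with
    | zero => exact cnt_four
    | succ k ih =>
      rw [show k + 1 + 4 = (k + 4) + 1 by ring, cnt_succ _ _ _ (by omega), ih]
      ring
  intro n hn
  obtain ⟨k, rfl⟩ : ∃ k, n = k + 4 := ⟨n - 4, by omega⟩
  have e1 : sAvoidContain p132 p231 (k + 4) = 2 ^ (k + 1) := hf (k + 1)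
  have e2 : sContainBoth p132 p231 (k + 4) = 2 ^ (k + 1) := hg k
  exact ⟨e1.trans e2.symm, e1⟩
end

section
/- Let φ: S_{m−1} → S_m be defined by φ(π_1π_2⋯π_{m−1}) = (π_1+1)(π_2+1)⋯(π_{m−1}+1)·1. For every n ≥ 4, the set S_n(312;123) of permutations of {1,…,n} avoiding 312 and containing 123 exactly once equals {φ(π) : π ∈ S_{n−1}(312;123)} ∪ {1 (n−1) n (n−2) (n−3) ⋯ 3 2, (n−2) (n−1) (n−3) (n−4) ⋯ 2 1 n}, the two listed words being the permutations 1,n−1,n,n−2,n−3,…,3,2 and n−2,n−1,n−3,n−4,…,2,1,n. -/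
/-- `φ : S_m → S_{m+1}` appends a new smallest element at the end:
`φ(π₁…π_m) = (π₁+1)(π₂+1)⋯(π_m+1)·1`. -/
def phi {m : ℕ} (π : Equiv.Perm (Fin m)) : Equiv.Perm (Fin (m + 1)) where
  toFun i := Fin.lastCases 0 (fun j => (π j).succ) i
  invFun v := Fin.cases (Fin.last m) (fun j => (π.symm j).castSucc) v
  left_inv i := by
    induction i using Fin.lastCases with
    | last => simp
    | cast j => simp
  right_inv v := by
    induction v using Fin.cases with
    | zero => simp
    | succ j => simp

/-- `S_n(α;β)`: the set of permutations of `{1,…,n}` avoiding `α` and containing `β`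
exactly once. -/
def SnAvoidContain (α β : Equiv.Perm (Fin 3)) (n : ℕ) : Set (Equiv.Perm (Fin n)) :=
  {π | avoids α π ∧ containsOnce β π}

/-- `S_n(∅;{α,β})`: the set of permutations of `{1,…,n}` containing each of `α` and `β`
exactly once. -/
def SnContainBoth (α β : Equiv.Perm (Fin 3)) (n : ℕ) : Set (Equiv.Perm (Fin n)) :=
  {π | containsOnce α π ∧ containsOnce β π}

/-- `π` is the permutation whose one-line word (1-indexed positions, values in `{1,…,n}`)
is given by `w`. -/
def hasWord {n : ℕ} (π : Equiv.Perm (Fin n)) (w : ℕ → ℕ) : Prop :=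
  ∀ j : Fin n, (π j : ℕ) + 1 = w ((j : ℕ) + 1)

/-- Word-level avoidance of 312. -/
def WA (s : ℕ → ℕ) (n : ℕ) : Prop :=
  ∀ i j k, i < j → j < k → k < n → s j < s k → s k < s i → False

/-- Word-level unique occurrence of 123. -/
def WO (s : ℕ → ℕ) (n : ℕ) : Prop :=
  ∃ a b c, a < b ∧ b < c ∧ c < n ∧ s a < s b ∧ s b < s c ∧
    ∀ i j k, i < j → j < k → k < n → s i < s j → s j < s k → i = a ∧ j = b ∧ k = c

/-- The word of a permutation, 0-indexed. -/
def wd {n : ℕ} (σ : Equiv.Perm (Fin n)) (i : ℕ) : ℕ := if h : i < n then (σ ⟨i, h⟩ : ℕ) else 0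

theorem wd_val {n : ℕ} (σ : Equiv.Perm (Fin n)) (i : Fin n) : wd σ i = σ i := by
  simp [wd]

theorem wd_mk {n : ℕ} (σ : Equiv.Perm (Fin n)) (i : ℕ) (h : i < n) : wd σ i = σ ⟨i, h⟩ := by
  simp [wd, h]

theorem wd_lt {n : ℕ} (σ : Equiv.Perm (Fin n)) (i : ℕ) (h : i < n) : wd σ i < n := by
  simp [wd, h]

theorem wd_inj {n : ℕ} (σ : Equiv.Perm (Fin n)) (i j : ℕ) (hi : i < n) (hj : j < n)
    (h : wd σ i = wd σ j) : i = j := by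
  rw [wd_mk σ i hi, wd_mk σ j hj] at h
  simpa using σ.injective (Fin.ext h)

theorem avoids_iff {n : ℕ} (σ : Equiv.Perm (Fin n)) : avoids p312 σ ↔ WA (wd σ) n := by
  unfold avoids occCount
  rw [Finite.card_eq_zero_iff, isEmpty_subtype]
  constructor
  · intro h i j k hij hjk hk h1 h2
    rw [wd_mk σ j (by omega), wd_mk σ k (by omega)] at h1
    rw [wd_mk σ i (by omega), wd_mk σ k (by omega)] at h2
    apply h ![⟨i, by omega⟩, ⟨j, by omega⟩, ⟨k, by omega⟩]
    constructor
    · rw [Fin.strictMono_iff_lt_succ]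
      intro x
      fin_cases x <;> simp <;> omega
    · intro a b
      fin_cases a <;> fin_cases b <;> simp [p312] <;> omega
  · rintro h f ⟨hf, hp⟩
    have h01 : f 0 < f 1 := hf (by decide)
    have h12 : f 1 < f 2 := hf (by decide)
    apply h (f 0) (f 1) (f 2) h01 h12 (f 2).2
    · rw [wd_val, wd_val]
      exact (hp 1 2).1 (by decide)
    · rw [wd_val, wd_val]
      exact (hp 2 0).1 (by decide)

theorem once_iff {n : ℕ} (σ : Equiv.Perm (Fin n)) : containsOnce p123 σ ↔ WO (wd σ) n := by
  unfold containsOnce occCount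
  rw [Nat.card_eq_one_iff_exists]
  have key : ∀ i j k (hi : i < n) (hj : j < n) (hk : k < n), i < j → j < k →
      wd σ i < wd σ j → wd σ j < wd σ k →
      (StrictMono ![(⟨i, hi⟩ : Fin n), ⟨j, hj⟩, ⟨k, hk⟩] ∧
        ∀ a b : Fin 3, p123 a < p123 b ↔
          σ (![(⟨i, hi⟩ : Fin n), ⟨j, hj⟩, ⟨k, hk⟩] a) <
            σ (![(⟨i, hi⟩ : Fin n), ⟨j, hj⟩, ⟨k, hk⟩] b)) := by
    intro i j k hi hj hk hij hjk h1 h2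
    rw [wd_mk σ i hi, wd_mk σ j hj] at h1
    rw [wd_mk σ j hj, wd_mk σ k hk] at h2
    constructor
    · rw [Fin.strictMono_iff_lt_succ]
      intro x
      fin_cases x <;> simp <;> omega
    · intro a b
      fin_cases a <;> fin_cases b <;> simp [p123] <;> omega
  constructor
  · rintro ⟨⟨f, hf, hp⟩, hu⟩
    have h01 : f 0 < f 1 := hf (by decide)
    have h12 : f 1 < f 2 := hf (by decide)
    refine ⟨f 0, f 1, f 2, h01, h12, (f 2).2, ?_, ?_, ?_⟩
    · rw [wd_val, wd_val]
      exact (hp 0 1).1 (by decide)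
    · rw [wd_val, wd_val]
      exact (hp 1 2).1 (by decide)
    · intro i j k hij hjk hk h1 h2
      have := hu ⟨_, key i j k (by omega) (by omega) hk hij hjk h1 h2⟩
      have e := congrArg Subtype.val this
      have e0 := congrArg Fin.val (congrFun e 0)
      have e1 := congrArg Fin.val (congrFun e 1)
      have e2 := congrArg Fin.val (congrFun e 2)
      exact ⟨e0, e1, e2⟩
  · rintro ⟨a, b, c, hab, hbc, hc, h1, h2, hu⟩
    refine ⟨⟨_, key a b c (by omega) (by omega) hc hab hbc h1 h2⟩, ?_⟩
    rintro ⟨f, hf, hp⟩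
    have h01 : f 0 < f 1 := hf (by decide)
    have h12 : f 1 < f 2 := hf (by decide)
    have := hu (f 0) (f 1) (f 2) h01 h12 (f 2).2
      (by rw [wd_val, wd_val]; exact (hp 0 1).1 (by decide))
      (by rw [wd_val, wd_val]; exact (hp 1 2).1 (by decide))
    obtain ⟨e0, e1, e2⟩ := this
    apply Subtype.ext
    funext x
    fin_cases x
    · exact Fin.ext e0
    · exact Fin.ext e1
    · exact Fin.ext e2

theorem mem_iff {n : ℕ} (σ : Equiv.Perm (Fin n)) :
    σ ∈ SnAvoidContain p312 p123 n ↔ WA (wd σ) n ∧ WO (wd σ) n := by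
  rw [← avoids_iff, ← once_iff]; rfl

theorem wd_phi {m : ℕ} (π : Equiv.Perm (Fin m)) (i : ℕ) (h : i < m) :
    wd (phi π) i = wd π i + 1 := by
  have h1 := wd_val (phi π) (Fin.castSucc ⟨i, h⟩)
  have h2 : phi π (Fin.castSucc ⟨i, h⟩) = (π ⟨i, h⟩).succ :=
    Fin.lastCases_castSucc (motive := fun _ => Fin (m + 1)) _
  rw [h2] at h1
  rw [wd_mk π i h]
  exact h1

theorem wd_phi_last {m : ℕ} (π : Equiv.Perm (Fin m)) : wd (phi π) m = 0 := by
  have := wd_val (phi π) (Fin.last m)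
  simpa [phi] using this

theorem phi_mem {m : ℕ} (π : Equiv.Perm (Fin m)) :
    phi π ∈ SnAvoidContain p312 p123 (m + 1) ↔ π ∈ SnAvoidContain p312 p123 m := by
  rw [mem_iff, mem_iff]
  have h0 := wd_phi_last π
  have h1 := wd_phi π
  have hA : WA (wd (phi π)) (m + 1) ↔ WA (wd π) m := by
    constructor
    · intro h i j k hij hjk hk a b
      refine h i j k hij hjk (by omega) ?_ ?_ <;>
        rw [h1 _ (by omega), h1 _ (by omega)] <;> omega
    · intro h i j k hij hjk hk a b
      have hkm : k ≠ m := by rintro rfl; omega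
      rw [h1 _ (by omega), h1 _ (by omega)] at a b
      exact h i j k hij hjk (by omega) (by omega) (by omega)
  have hT : ∀ i j k, (i < j ∧ j < k ∧ k < m + 1 ∧ wd (phi π) i < wd (phi π) j ∧
      wd (phi π) j < wd (phi π) k) ↔
      (i < j ∧ j < k ∧ k < m ∧ wd π i < wd π j ∧ wd π j < wd π k) := by
    intro i j k
    constructor
    · rintro ⟨hij, hjk, hk, a, b⟩
      have hkm : k ≠ m := by rintro rfl; omega
      rw [h1 _ (by omega), h1 _ (by omega)] at a b
      omega
    · rintro ⟨hij, hjk, hk, a, b⟩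
      rw [h1 i (by omega), h1 j (by omega), h1 k (by omega)]
      omega
  rw [hA]
  refine and_congr_right fun _ => ?_
  constructor
  · rintro ⟨a, b, c, x1, x2, x3, x4, x5, hu⟩
    obtain ⟨y1, y2, y3, y4, y5⟩ := (hT a b c).1 ⟨x1, x2, x3, x4, x5⟩
    refine ⟨a, b, c, y1, y2, y3, y4, y5, ?_⟩
    intro i j k z1 z2 z3 z4 z5
    obtain ⟨y1, y2, y3, y4, y5⟩ := (hT i j k).2 ⟨z1, z2, z3, z4, z5⟩
    exact hu i j k y1 y2 y3 y4 y5
  · rintro ⟨a, b, c, x1, x2, x3, x4, x5, hu⟩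
    obtain ⟨y1, y2, y3, y4, y5⟩ := (hT a b c).2 ⟨x1, x2, x3, x4, x5⟩
    refine ⟨a, b, c, y1, y2, y3, y4, y5, ?_⟩
    intro i j k z1 z2 z3 z4 z5
    obtain ⟨y1, y2, y3, y4, y5⟩ := (hT i j k).1 ⟨z1, z2, z3, z4, z5⟩
    exact hu i j k y1 y2 y3 y4 y5

theorem phi_surj {m : ℕ} (σ : Equiv.Perm (Fin (m + 1))) (h : σ (Fin.last m) = 0) :
    ∃ π, phi π = σ := by
  have hne : ∀ j : Fin m, σ j.castSucc ≠ 0 := by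
    intro j hj
    rw [← h] at hj
    exact (Fin.castSucc_lt_last j).ne (σ.injective hj)
  let g : Fin m → Fin m := fun j => (σ j.castSucc).pred (hne j)
  have hg : Function.Injective g := by
    intro x y hxy
    have := Fin.pred_inj.1 hxy
    exact Fin.castSucc_injective _ (σ.injective this)
  refine ⟨Equiv.ofBijective g (Finite.injective_iff_bijective.1 hg), ?_⟩
  ext i
  induction i using Fin.lastCases with
  | last => simp [phi, h]
  | cast j => simp [phi, g]

/-- A permutation is determined by the relative order of its word. -/
theorem order_eq {n : ℕ} (σ : Equiv.Perm (Fin n)) (w : ℕ → ℕ) (hw : ∀ i < n, w i < n)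
    (hinj : ∀ i j, i < j → j < n → w i ≠ w j)
    (ho : ∀ i j, i < j → j < n → (wd σ i < wd σ j ↔ w i < w j)) :
    ∀ i < n, wd σ i = w i := by
  let g : Fin n → Fin n := fun i => ⟨w i, hw i i.2⟩
  have hg : Function.Injective g := by
    intro x y hxy
    have e : w x = w y := congrArg Fin.val hxy
    rcases lt_trichotomy (x : ℕ) y with h | h | h
    · exact absurd e (hinj x y h y.2)
    · exact Fin.ext h
    · exact absurd e.symm (hinj y x h x.2)
  let ρ : Equiv.Perm (Fin n) := Equiv.ofBijective g (Finite.injective_iff_bijective.1 hg)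
  have hmono : StrictMono (ρ.symm.trans σ) := by
    intro u v huv
    obtain ⟨x, rfl⟩ := ρ.surjective u
    obtain ⟨y, rfl⟩ := ρ.surjective v
    have hxy : w x < w y := huv
    simp only [Equiv.trans_apply, Equiv.symm_apply_apply]
    rw [Fin.lt_def, ← wd_val, ← wd_val]
    rcases lt_trichotomy (x : ℕ) y with h | h | h
    · exact (ho x y h y.2).2 hxy
    · rw [h] at hxy; omega
    · have h1 := ho y x h x.2
      have h2 : wd σ x ≠ wd σ y := fun e => by
        have := wd_inj σ x y x.2 y.2 e
        omega
      omega
  have hid : ∀ u, (ρ.symm.trans σ) u = u := by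
    have := Subsingleton.elim
      (StrictMono.orderIsoOfSurjective _ hmono (ρ.symm.trans σ).surjective) (OrderIso.refl _)
    intro u
    exact congrArg (fun e : Fin n ≃o Fin n => e u) this
  intro i hi
  have := hid (ρ ⟨i, hi⟩)
  simp only [Equiv.trans_apply, Equiv.symm_apply_apply] at this
  rw [wd_mk σ i hi, this]
  rfl

/-- The combinatorial heart. -/
theorem heart (s : ℕ → ℕ) (m k : ℕ) (hm : 3 ≤ m)
    (hinj : ∀ i j, i < m + 1 → j < m + 1 → s i = s j → i = j)
    (hA : WA s (m + 1)) (hO : WO s (m + 1)) (hk : k < m) (hk0 : s k = 0) :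
    (s 0 = 0 ∧ s 1 < s 2 ∧ ∀ i j, 1 ≤ i → i < j → j < m + 1 → ¬ (i = 1 ∧ j = 2) → s j < s i) ∨
    (s (m - 1) = 0 ∧ s 0 < s 1 ∧ (∀ i < m, s i < s m) ∧
      ∀ i j, i < j → j < m → ¬ (i = 0 ∧ j = 1) → s j < s i) := by
  obtain ⟨a, b, c, hab, hbc, hc, h1, h2, hu⟩ := hO
  have hpos : ∀ i, i < m + 1 → i ≠ k → 0 < s i := by
    intro i hi hik
    rcases Nat.eq_zero_or_pos (s i) with h | h
    · exact absurd (hinj i k hi (by omega) (by omega)) hik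
    · exact h
  have hne : ∀ i j, i < j → j < m + 1 → s i ≠ s j := by
    intro i j hij hj e
    have := hinj i j (by omega) hj e
    omega
  rcases Nat.eq_zero_or_pos k with rfl | hkp
  · left
    have ha : a = 0 := by
      by_contra ha
      have := hu 0 b c (by omega) hbc hc (by have := hpos b (by omega) (by omega); omega) h2
      omega
    subst ha
    have hni : ∀ i j, 1 ≤ i → i < j → j < m + 1 → ¬ (i = b ∧ j = c) → s j < s i := by
      intro i j hi hij hj hn
      have h3 := hne i j hij hj
      by_contra h4
      have := hu 0 i j (by omega) hij hj (by have := hpos i (by omega) (by omega); omega) (by omega)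
      omega
    have hb : b = 1 := by
      by_contra hb
      exact hA 1 b c (by omega) hbc hc h2 (hni 1 c (by omega) (by omega) hc (by omega))
    subst hb
    have hc2 : c = 2 := by
      by_contra hc2
      have x1 := hni 1 2 (by omega) (by omega) (by omega) (by omega)
      have x2 := hni 2 c (by omega) (by omega) (by omega) (by omega)
      omega
    subst hc2
    exact ⟨hk0, h2, hni⟩
  · right
    have hlt : ∀ p q, p < k → k < q → q < m + 1 → s p < s q := by
      intro p q hp hq hqm
      have x := hne p q (by omega) hqm
      by_contra h
      exact hA p k q hp hq hqm (by have := hpos q hqm (by omega); omega) (by omega)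
    have hck : k < c := by
      by_contra h
      have : c ≠ k := by rintro rfl; omega
      have := hu a b m hab (by omega) (by omega) h1 (hlt b m (by omega) (by omega) (by omega))
      omega
    have hbk : b < k := by
      by_contra h
      have : b ≠ k := by rintro rfl; omega
      have x := hu 0 b c (by omega) hbc hc (hlt 0 b (by omega) (by omega) (by omega)) h2
      have y := hu k b c (by omega) hbc hc (by have := hpos b (by omega) (by omega); omega) h2
      omega
    have hcm := hu a b m hab (by omega) (by omega) h1 (hlt b m (by omega) (by omega) (by omega))
    have hck1 := hu a b (k+1) hab (by omega) (by omega) h1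
      (hlt b (k+1) (by omega) (by omega) (by omega))
    obtain rfl : k = m - 1 := by omega
    have hni : ∀ i j, i < j → j < m → ¬ (i = a ∧ j = b) → s j < s i := by
      intro i j hij hj hn
      rcases Nat.lt_or_ge j (m-1) with hj' | hj'
      · have h3 := hne i j hij (by omega)
        by_contra h4
        have := hu i j m hij hj (by omega) (by omega) (hlt j m (by omega) (by omega) (by omega))
        omega
      · obtain rfl : j = m - 1 := by omega
        have := hpos i (by omega) (by omega)
        omega
    have ha : a = 0 := by
      by_contra ha
      exact hA 0 a b (by omega) hab (by omega) h1 (hni 0 b (by omega) (by omega) (by omega))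
    subst ha
    have hb : b = 1 := by
      by_contra hb
      have x1 := hni 0 1 (by omega) (by omega) (by omega)
      have x2 := hni 1 b (by omega) (by omega) (by omega)
      omega
    subst hb
    refine ⟨hk0, h1, ?_, hni⟩
    intro i hi
    rcases Nat.lt_or_ge i (m-1) with hi' | hi'
    · exact hlt i m hi' (by omega) (by omega)
    · obtain rfl : i = m - 1 := by omega
      have := hpos m (by omega) (by omega)
      omega

theorem hasWord_iff {n : ℕ} (σ : Equiv.Perm (Fin n)) (w : ℕ → ℕ) :
    hasWord σ w ↔ ∀ i < n, wd σ i + 1 = w (i + 1) := by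
  constructor
  · intro h i hi
    rw [wd_mk σ i hi]
    exact h ⟨i, hi⟩
  · intro h j
    rw [← wd_val]
    exact h j j.2

/-- Generating rule for `S_n(312;123)`, `n = m+1 ≥ 4`:
`S_n(312;123) = φ(S_{n−1}(312;123)) ∪ {1 (n−1) n (n−2)(n−3) ⋯ 3 2, (n−2)(n−1)(n−3)(n−4) ⋯ 2 1 n}`. -/
theorem generating_rule_312_123 :
    ∀ m : ℕ, 4 ≤ m + 1 →
      SnAvoidContain p312 p123 (m + 1) =
        phi '' SnAvoidContain p312 p123 m ∪
          {σ | hasWord σ (fun j =>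
            if j = 1 then 1 else if j = 2 then m
            else if j = 3 then m + 1 else m + 3 - j)} ∪
          {σ | hasWord σ (fun j =>
            if j = 1 then m - 1 else if j = 2 then m
            else if j = m + 1 then m + 1 else m + 1 - j)} := by
  intro m hm
  ext σ
  simp only [Set.mem_union, Set.mem_image, Set.mem_ofPred_eq]
  constructor
  · intro hσ
    have hσ' := hσ
    rw [mem_iff] at hσ'
    obtain ⟨hA, hO⟩ := hσ'
    obtain ⟨k, hk⟩ := σ.surjective 0
    rcases Nat.lt_or_ge k m with hkm | hkm
    · have hk0 : wd σ k = 0 := by rw [wd_val, hk]; rfl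
      rcases heart (wd σ) m k (by omega) (fun i j hi hj h => wd_inj σ i j hi hj h) hA hO hkm hk0
        with ⟨h0, h12, hd⟩ | ⟨h0, h01, hlast, hd⟩
      · left; right
        rw [hasWord_iff]
        have hp : ∀ i, 1 ≤ i → i < m + 1 → 0 < wd σ i := by
          intro i hi him
          by_contra h
          have := wd_inj σ i 0 him (by omega) (by omega)
          omega
        have := order_eq σ (fun i => if i = 0 then 0 else if i = 1 then m - 1
            else if i = 2 then m else m + 1 - i)
          (by intro i hi; split_ifs <;> omega)
          (by intro i j hij hj; split_ifs <;> omega)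
          (by
            intro i j hij hj
            rcases Nat.eq_zero_or_pos i with rfl | hi
            · have := hp j (by omega) hj
              split_ifs <;> omega
            · by_cases hx : i = 1 ∧ j = 2
              · obtain ⟨rfl, rfl⟩ := hx
                simp; omega
              · have := hd i j hi hij hj hx
                split_ifs <;> omega)
        intro i hi
        rw [this i hi]
        split_ifs <;> omega
      · right
        rw [hasWord_iff]
        have := order_eq σ (fun i => if i = 0 then m - 2 else if i = 1 then m - 1
            else if i = m then m else m - 1 - i)
          (by intro i hi; split_ifs <;> omega)
          (by intro i j hij hj; split_ifs <;> omega)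
          (by
            intro i j hij hj
            rcases Nat.lt_or_ge j m with hjm | hjm
            · by_cases hx : i = 0 ∧ j = 1
              · obtain ⟨rfl, rfl⟩ := hx
                simp; omega
              · have := hd i j hij hjm hx
                split_ifs <;> omega
            · obtain rfl : j = m := by omega
              have := hlast i hij
              split_ifs <;> omega)
        intro i hi
        rw [this i hi]
        split_ifs <;> omega
    · left; left
      obtain rfl : k = Fin.last m := Fin.ext (by simp; omega)
      obtain ⟨π, rfl⟩ := phi_surj σ hk
      exact ⟨π, (phi_mem π).1 hσ, rfl⟩
  · rintro ((⟨π, hπ, rfl⟩ | h) | h)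
    · exact (phi_mem π).2 hπ
    · rw [hasWord_iff] at h
      rw [mem_iff]
      constructor
      · intro i j k hij hjk hk a b
        have hi := h i (by omega)
        have hj := h j (by omega)
        have hk := h k (by omega)
        split_ifs at hi hj hk <;> omega
      · have e0 := h 0 (by omega)
        have e1 := h 1 (by omega)
        have e2 := h 2 (by omega)
        simp at e0 e1 e2
        refine ⟨0, 1, 2, by omega, by omega, by omega, by omega, by omega, ?_⟩
        intro i j k hij hjk hk a b
        have hi := h i (by omega)
        have hj := h j (by omega)
        have hk := h k (by omega)
        split_ifs at hi hj hk <;> omega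
    · rw [hasWord_iff] at h
      rw [mem_iff]
      constructor
      · intro i j k hij hjk hk a b
        have hi := h i (by omega)
        have hj := h j (by omega)
        have hk := h k (by omega)
        split_ifs at hi hj hk <;> omega
      · have e0 := h 0 (by omega)
        have e1 := h 1 (by omega)
        have e2 := h m (by omega)
        rw [if_pos (by omega)] at e0
        rw [if_neg (by omega), if_pos (by omega)] at e1
        rw [if_neg (by omega), if_neg (by omega), if_pos (by omega)] at e2
        refine ⟨0, 1, m, by omega, by omega, by omega, by omega, by omega, ?_⟩
        intro i j k hij hjk hk a b
        have hi := h i (by omega)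
        have hj := h j (by omega)
        have hk := h k (by omega)
        split_ifs at hi hj hk <;> omega
end
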